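/- Let $n \geq 1$, $0 < \alpha < n$, $r, s > 1$ with $\frac{1}{r} + \frac{1}{s} + \frac{n-\alpha}{n} > 2$. Then the best constant $C_{r,s,\alpha}$ of the discrete Hardy-Littlewood-Sobolev inequality is attained: there exist nonnegative $f \in \ell^r(\mathbb{Z}^n)$, $g \in \ell^s(\mathbb{Z}^n)$ with $\|f\|_{\ell^r} = \|g\|_{\ell^s} = 1$ and $\sum_{i}\sum_{j \neq i} \frac{f_i g_j}{|i-j|^{n-\alpha}} = C_{r,s,\alpha}$. -/

import Mathlib

/-!
The proof is a concentration-compactness argument on the lattice, carried out for the form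
`Bil K f g = ∑_{i,j} f i * g j * K (i - j)` with values in `ℝ≥0∞`.

The supercritical condition is strict, so the inequality `hls` (an instance of Young's inequality)
still holds when `f` is measured in an `ℓ^p` with `p` slightly above `r`. This gives non-vanishing
(`exists_large_value`): along a maximizing sequence `(f_k, g_k)` the supremum of `f_k` stays away
from zero, and after a translation so does `f_k 0`.

Let `(f, g)` be the pointwise limit along an ultrafilter. For a finite set `B`, the pairs `(i, j)`
meeting `B` contribute at most `Bil K f g` in the limit (`nearPart_limit`), because translates of
`K` lie in the dual spaces of `ℓ^r` and `ℓ^s`. The remaining pairs contribute at most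
`C * (1 - a_B) ^ (1 / r) * (1 - b_B) ^ (1 / s)`, where `C` is the supremum and `a_B`, `b_B` are the
sums of `f ^ r` and `g ^ s` over `B`. As `B` grows this yields
`C ≤ Bil K f g + C * (1 - a) ^ (1 / r) * (1 - b) ^ (1 / s)` with `a = ∑ f ^ r > 0`, `b = ∑ g ^ s`.
Since `Bil K f g ≤ C * a ^ (1 / r) * b ^ (1 / s)` and `1 / r + 1 / s > 1`, this forces `a = b = 1`
(`real_dichotomy`), and then `C ≤ Bil K f g`.
-/

open scoped BigOperators
open Filter MeasureTheory

/-- Euclidean norm of a lattice point in `ℤ^n`. -/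
noncomputable def znorm {n : ℕ} (v : Fin n → ℤ) : ℝ :=
  ‖(WithLp.equiv 2 (Fin n → ℝ)).symm (fun t => (v t : ℝ))‖

/-- The `ℓ^p` norm of a sequence indexed by `ℤ^n`. -/
noncomputable def lpNorm {n : ℕ} (f : (Fin n → ℤ) → ℝ) (p : ℝ) : ℝ :=
  (∑' i, |f i| ^ p) ^ (1 / p)

/-- The discrete HLS bilinear functional. -/
noncomputable def J {n : ℕ} (α : ℝ) (f g : (Fin n → ℤ) → ℝ) : ℝ :=
  ∑' i, ∑' j, if j ≠ i then f i * g j / znorm (i - j) ^ ((n : ℝ) - α) else 0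

/-- Best constant of the discrete HLS inequality on all of ℤ^n. -/
noncomputable def bestConst (n : ℕ) (α r s : ℝ) : ℝ :=
  sSup {c : ℝ | ∃ f g : (Fin n → ℤ) → ℝ, (∀ i, 0 ≤ f i) ∧ (∀ i, 0 ≤ g i) ∧
    lpNorm f r = 1 ∧ lpNorm g s = 1 ∧ c = J α f g}

open scoped ENNReal Topology

/-! ### Convolution forms and Young's inequality -/

/-- The convolution form `∑_{i,j} f i * g j * K (i - j)` on an additive group. It is valued in
`ℝ≥0∞`, so that no summability has to be tracked. -/
noncomputable def Bil {I : Type*} [AddCommGroup I] (K f g : I → ℝ≥0∞) : ℝ≥0∞ :=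
  ∑' i, ∑' j, f i * g j * K (i - j)

/-- Hölder's inequality for sums, valid without any summability assumption. -/
lemma tsum_mul_le_holder {I : Type*} (h g : I → ℝ≥0∞) {p q : ℝ} (hpq : p.HolderConjugate q) :
    ∑' i, h i * g i ≤ (∑' i, h i ^ p) ^ (1 / p) * (∑' i, g i ^ q) ^ (1 / q) := by
  let _ : MeasurableSpace I := ⊤
  have := ENNReal.lintegral_mul_le_Lp_mul_Lq (Measure.count : Measure I) hpq
    (f := h) (g := g) measurable_from_top.aemeasurable measurable_from_top.aemeasurable
  simpa [lintegral_count] using this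

/-- Young's convolution inequality, written for the densities `F = f ^ (1 / a)`, `G = g ^ (1 / b)`,
`H = h ^ (1 / c)`. It is Hölder's inequality on `I × I` with exponents `1 - c`, `1 - a`, `1 - b` for
`F i * G j`, `G j * H (i - j)` and `H (i - j) * F i`. -/
lemma young {I : Type*} [AddCommGroup I] (F G H : I → ℝ≥0∞) {a b c : ℝ}
    (ha : a ≤ 1) (hb : b ≤ 1) (hc : c ≤ 1) (habc : a + b + c = 2) :
    ∑' i, ∑' j, F i ^ a * G j ^ b * H (i - j) ^ c
      ≤ (∑' i, F i) ^ a * (∑' i, G i) ^ b * (∑' i, H i) ^ c := by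
  let _ : MeasurableSpace (I × I) := ⊤
  have key := ENNReal.lintegral_prod_norm_pow_le (μ := (Measure.count : Measure (I × I)))
    (Finset.univ : Finset (Fin 3))
    (f := ![fun x => F x.1 * G x.2, fun x => G x.2 * H (x.1 - x.2), fun x => H (x.1 - x.2) * F x.1])
    (p := ![1 - c, 1 - a, 1 - b])
    (fun i _ => measurable_from_top.aemeasurable)
    (by simp [Fin.sum_univ_three]; linarith)
    (by intro i _; fin_cases i <;> simp <;> linarith)
  have e1 : ∑' x : I × I, F x.1 * G x.2 = (∑' i, F i) * ∑' i, G i := by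
    rw [ENNReal.tsum_prod (f := fun i j => F i * G j)]
    simp_rw [ENNReal.tsum_mul_left, ENNReal.tsum_mul_right]
  have e2 : ∑' x : I × I, G x.2 * H (x.1 - x.2) = (∑' i, G i) * ∑' i, H i := by
    rw [ENNReal.tsum_prod (f := fun i j => G j * H (i - j)), ENNReal.tsum_comm]
    simp_rw [ENNReal.tsum_mul_left]
    rw [← ENNReal.tsum_mul_right]
    exact tsum_congr fun j => by rw [← (Equiv.subRight j).tsum_eq H]; rfl
  have e3 : ∑' x : I × I, H (x.1 - x.2) * F x.1 = (∑' i, H i) * ∑' i, F i := by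
    rw [ENNReal.tsum_prod (f := fun i j => H (i - j) * F i)]
    simp_rw [ENNReal.tsum_mul_right]
    rw [← ENNReal.tsum_mul_left]
    exact tsum_congr fun j => by rw [← (Equiv.subLeft j).tsum_eq H]; rfl
  have split : ∀ x y z : ℝ≥0∞, (x * y) ^ (1 - c) * (y * z) ^ (1 - a) * (z * x) ^ (1 - b)
      = x ^ a * y ^ b * z ^ c := by
    intro x y z
    rw [ENNReal.mul_rpow_of_nonneg _ _ (by linarith), ENNReal.mul_rpow_of_nonneg _ _ (by linarith),
      ENNReal.mul_rpow_of_nonneg _ _ (by linarith)]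
    have hx : x ^ a = x ^ (1 - c) * x ^ (1 - b) := by
      rw [← ENNReal.rpow_add_of_nonneg _ _ (by linarith) (by linarith)]; congr 1; linarith
    have hy : y ^ b = y ^ (1 - c) * y ^ (1 - a) := by
      rw [← ENNReal.rpow_add_of_nonneg _ _ (by linarith) (by linarith)]; congr 1; linarith
    have hz : z ^ c = z ^ (1 - a) * z ^ (1 - b) := by
      rw [← ENNReal.rpow_add_of_nonneg _ _ (by linarith) (by linarith)]; congr 1; linarith
    rw [hx, hy, hz]; ring
  simp only [lintegral_count, Fin.prod_univ_three, Matrix.cons_val_zero, Matrix.cons_val_one,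
    Matrix.cons_val, e1, e2, e3, split] at key
  rwa [ENNReal.tsum_prod (f := fun i j => F i ^ a * G j ^ b * H (i - j) ^ c)] at key

/-- The Hardy-Littlewood-Sobolev inequality for a kernel lying in every `ℓ^q` with `1 / q < θ`: in the
supercritical range, `K` lies in the `ℓ^q` with `1 / q = 2 - 1 / r - 1 / s`, and Young's inequality
applies. -/
lemma hls {I : Type*} [AddCommGroup I] (K : I → ℝ≥0∞) {θ : ℝ} (hθ : θ < 1)
    (hK : ∀ q : ℝ, 0 < q → 1 / q < θ → ∑' v, K v ^ q ≠ ∞)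
    {r s : ℝ} (hr : 1 < r) (hs : 1 < s) (hrs : 2 < 1 / r + 1 / s + θ) :
    ∃ A : ℝ≥0∞, A ≠ ∞ ∧ ∀ f g : I → ℝ≥0∞,
      Bil K f g ≤ A * (∑' i, f i ^ r) ^ (1 / r) * (∑' i, g i ^ s) ^ (1 / s) := by
  have hr1 : 1 / r < 1 := by rw [div_lt_one] <;> linarith
  have hs1 : 1 / s < 1 := by rw [div_lt_one] <;> linarith
  obtain ⟨c, hc⟩ : ∃ c, c = 2 - 1 / r - 1 / s := ⟨_, rfl⟩
  have hc0 : 0 < c := by linarith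
  refine ⟨(∑' v, K v ^ (1 / c)) ^ c, ?_, fun f g => ?_⟩
  · exact ENNReal.rpow_ne_top_of_nonneg hc0.le
      (hK _ (by positivity) (by rw [one_div_one_div]; linarith))
  · have := young (fun i => f i ^ r) (fun i => g i ^ s) (fun v => K v ^ (1 / c))
      hr1.le hs1.le (c := c) (by linarith) (by linarith)
    simp_rw [← ENNReal.rpow_mul] at this
    rw [mul_one_div_cancel (by linarith), mul_one_div_cancel (by linarith),
      one_div_mul_cancel hc0.ne'] at this
    simp only [ENNReal.rpow_one] at this
    unfold Bil
    refine this.trans (le_of_eq (by ring))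

lemma Bil_shift {I : Type*} [AddCommGroup I] (K f g : I → ℝ≥0∞) (a : I) :
    Bil K (fun i => f (i + a)) (fun i => g (i + a)) = Bil K f g := by
  unfold Bil
  rw [← (Equiv.addRight a).tsum_eq (fun i => ∑' j, f i * g j * K (i - j))]
  refine tsum_congr fun i => ?_
  rw [← (Equiv.addRight a).tsum_eq (fun j => f _ * g j * K (_ - j))]
  simp

lemma rpow_scale {I : Type*} (f : I → ℝ≥0∞) {r : ℝ} (hr : 1 < r)
    (h0 : ∑' i, f i ^ r ≠ 0) (h1 : ∑' i, f i ^ r ≠ ∞) :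
    ∑' i, (f i * ((∑' i, f i ^ r) ^ (1 / r))⁻¹) ^ r = 1 := by
  have hr0 : 0 < r := by linarith
  simp_rw [ENNReal.mul_rpow_of_nonneg _ _ hr0.le]
  rw [ENNReal.tsum_mul_right, ENNReal.inv_rpow, ← ENNReal.rpow_mul, one_div_mul_cancel hr0.ne',
    ENNReal.rpow_one, ENNReal.mul_inv_cancel h0 h1]

lemma eq_zero_of_tsum_rpow {I : Type*} (f : I → ℝ≥0∞) {r : ℝ} (hr : 1 < r)
    (h0 : ∑' i, f i ^ r = 0) (i : I) : f i = 0 := by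
  have := ENNReal.tsum_eq_zero.1 h0 i
  exact (ENNReal.rpow_eq_zero_iff_of_pos (by linarith)).1 this

/-- A bound on the unit balls extends to all of `ℓ^r × ℓ^s` by homogeneity. -/
lemma Bil_le_of_normalized {I : Type*} [AddCommGroup I] (K : I → ℝ≥0∞) {r s : ℝ} (hr : 1 < r)
    (hs : 1 < s) {C : ℝ≥0∞}
    (hC : ∀ f g : I → ℝ≥0∞, ∑' i, f i ^ r ≤ 1 → ∑' i, g i ^ s ≤ 1 → Bil K f g ≤ C)
    (f g : I → ℝ≥0∞) (hf : ∑' i, f i ^ r ≠ ∞) (hg : ∑' i, g i ^ s ≠ ∞) :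
    Bil K f g ≤ C * (∑' i, f i ^ r) ^ (1 / r) * (∑' i, g i ^ s) ^ (1 / s) := by
  by_cases hf0 : ∑' i, f i ^ r = 0
  · simp [Bil, eq_zero_of_tsum_rpow f hr hf0]
  by_cases hg0 : ∑' i, g i ^ s = 0
  · simp [Bil, eq_zero_of_tsum_rpow g hs hg0]
  have hr0 : 0 < 1 / r := by positivity
  have hs0 : 0 < 1 / s := by positivity
  have h := hC _ _ (rpow_scale f hr hf0 hf).le (rpow_scale g hs hg0 hg).le
  generalize hx : (∑' i, f i ^ r) ^ (1 / r) = x at *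
  generalize hy : (∑' i, g i ^ s) ^ (1 / s) = y at *
  have hx0 : x ≠ 0 := by rw [← hx]; simp [hf0, hf]
  have hy0 : y ≠ 0 := by rw [← hy]; simp [hg0, hg]
  have hxt : x ≠ ∞ := by rw [← hx]; exact ENNReal.rpow_ne_top_of_nonneg hr0.le hf
  have hyt : y ≠ ∞ := by rw [← hy]; exact ENNReal.rpow_ne_top_of_nonneg hs0.le hg
  have e : Bil K f g = Bil K (fun i => f i * x⁻¹) (fun i => g i * y⁻¹) * (x * y) := by
    unfold Bil
    rw [← ENNReal.tsum_mul_right]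
    refine tsum_congr fun i => ?_
    rw [← ENNReal.tsum_mul_right]
    refine tsum_congr fun j => ?_
    calc f i * g j * K (i - j) = f i * g j * K (i - j) * (x⁻¹ * x) * (y⁻¹ * y) := by
          rw [ENNReal.inv_mul_cancel hx0 hxt, ENNReal.inv_mul_cancel hy0 hyt]; simp
      _ = _ := by ring
  rw [e, mul_assoc]
  gcongr

/-- Weak sequential continuity (the inequality needed later): bounded sequences in `ℓ^s` that converge
pointwise lose no mass when paired with a fixed `h` in the dual space `ℓ^s'`, because the tails of
`h` are small in `ℓ^s'`. -/
lemma le_tsum_of_tendsto {I : Type*} (h : I → ℝ≥0∞) {s s' : ℝ} (hs : s'.HolderConjugate s)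
    (hh : ∑' j, h j ^ s' ≠ ∞) {U : Filter ℕ} [U.NeBot] (G : ℕ → I → ℝ≥0∞) (g : I → ℝ≥0∞)
    (hG : ∀ k, ∑' j, G k j ^ s ≤ 1) (hlim : ∀ j, Tendsto (fun k => G k j) U (𝓝 (g j)))
    {L : ℝ≥0∞} (hL : Tendsto (fun k => ∑' j, G k j * h j) U (𝓝 L)) :
    L ≤ ∑' j, g j * h j := by
  have hs'0 : 0 < s' := hs.pos
  have hs0 : 0 < s := hs.symm.pos
  have hfin : ∀ j, h j ≠ ∞ := fun j hj => by
    have := ENNReal.ne_top_of_tsum_ne_top hh j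
    rw [hj, ENNReal.top_rpow_of_pos hs'0] at this
    exact this rfl
  -- Hölder on the complement of `B` bounds the tail uniformly in `k`
  have step : ∀ B : Finset I,
      L ≤ ∑' j, g j * h j + (∑' j : { x // x ∉ B }, h j ^ s') ^ (1 / s') := by
    intro B
    refine (le_of_tendsto_of_tendsto' hL (Tendsto.add_const
      ((∑' j : { x // x ∉ B }, h j ^ s') ^ (1 / s')) (tendsto_finsetSum B fun j _ =>
        ENNReal.Tendsto.mul_const (hlim j) (Or.inr (hfin j)))) fun k => ?_).trans ?_
    · rw [← ENNReal.sum_add_tsum_compl B]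
      refine add_le_add le_rfl ?_
      have := tsum_mul_le_holder (fun j : { x // x ∉ B } => h j) (fun j => G k j) hs
      simp_rw [mul_comm (h _)] at this
      refine this.trans (mul_le_of_le_one_right' ?_)
      refine ENNReal.rpow_le_one ?_ (by positivity)
      exact (ENNReal.tsum_comp_le_tsum_of_injective Subtype.val_injective
        (fun j => G k j ^ s)).trans (hG k)
    · gcongr
      exact ENNReal.sum_le_tsum _
  have ht := (ENNReal.tendsto_tsum_compl_atTop_zero hh)
  have ht2 := (ENNReal.continuous_rpow_const (y := 1 / s')).tendsto 0 |>.comp ht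
  rw [ENNReal.zero_rpow_of_pos (by positivity)] at ht2
  have := ge_of_tendsto' (ht2.const_add (∑' j, g j * h j)) step
  simpa using this

/-! ### Cutting the form along a finite set -/

open Classical in
/-- The part of the form `Bil K f g` carried by the pairs `(i, j)` with `i ∈ B` or `j ∈ B`; the second
sum leaves out the pairs with `i ∈ B`, which are counted in the first. -/
noncomputable def nearPart {I : Type*} [AddCommGroup I] (K f g : I → ℝ≥0∞) (B : Finset I) : ℝ≥0∞ :=
  ∑ i ∈ B, ∑' j, f i * g j * K (i - j)
    + ∑ j ∈ B, ∑' i, (if i ∈ B then 0 else f i * g j) * K (i - j)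

open Classical in
/-- The restriction of `f` to the complement of `B`, extended by zero. -/
noncomputable def off {I : Type*} (B : Finset I) (f : I → ℝ≥0∞) (i : I) : ℝ≥0∞ :=
  if i ∈ B then 0 else f i

open Classical in
lemma nearPart_add_off {I : Type*} [AddCommGroup I] (K f g : I → ℝ≥0∞) (B : Finset I) :
    Bil K f g = nearPart K f g B + Bil K (off B f) (off B g) := by
  have h1 : ∑ i ∈ B, ∑' j, f i * g j * K (i - j)
      = ∑' i, ∑' j, if i ∈ B then f i * g j * K (i - j) else 0 := by
    rw [tsum_eq_sum (s := B) (fun i hi => by simp [hi])]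
    exact Finset.sum_congr rfl fun i hi => by simp [hi]
  have h2 : ∑ j ∈ B, ∑' i, (if i ∈ B then 0 else f i * g j) * K (i - j)
      = ∑' i, ∑' j, if j ∈ B then (if i ∈ B then 0 else f i * g j) * K (i - j) else 0 := by
    rw [ENNReal.tsum_comm, tsum_eq_sum (s := B) (fun i hi => by simp [hi])]
    exact Finset.sum_congr rfl fun i hi => by simp [hi]
  unfold nearPart
  rw [h1, h2]
  unfold Bil
  rw [← ENNReal.tsum_add, ← ENNReal.tsum_add]
  refine tsum_congr fun i => ?_
  rw [← ENNReal.tsum_add, ← ENNReal.tsum_add]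
  refine tsum_congr fun j => ?_
  unfold off
  by_cases hi : i ∈ B <;> by_cases hj : j ∈ B <;> simp [hi, hj]

/-- Since `ℝ≥0∞` is compact, every sequence converges along an ultrafilter. -/
lemma exists_tendsto (U : Ultrafilter ℕ) (x : ℕ → ℝ≥0∞) : ∃ L, Tendsto x U (𝓝 L) :=
  ⟨(U.map x).lim, (U.map x).le_nhds_lim⟩

lemma le_one_of_tsum_rpow {I : Type*} {f : I → ℝ≥0∞} {r : ℝ} (hr : 1 < r)
    (h : ∑' i, f i ^ r ≤ 1) (i : I) : f i ≤ 1 := by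
  have h1 : f i ^ r ≤ 1 := (ENNReal.le_tsum (f := fun i => f i ^ r) i).trans h
  by_contra! hlt
  exact h1.not_gt (ENNReal.one_lt_rpow hlt (by linarith))

lemma sum_le_of_tendsto {I : Type*} {U : Ultrafilter ℕ} (B : Finset I) (X : ℕ → I → ℝ≥0∞)
    (Y : I → ℝ≥0∞)
    (h : ∀ i ∈ B, ∀ L, Tendsto (fun k => X k i) U (𝓝 L) → L ≤ Y i) {L : ℝ≥0∞}
    (hL : Tendsto (fun k => ∑ i ∈ B, X k i) U (𝓝 L)) : L ≤ ∑ i ∈ B, Y i := by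
  choose l hl using fun i => exists_tendsto U (fun k => X k i)
  rw [tendsto_nhds_unique hL (tendsto_finsetSum B fun i _ => hl i)]
  exact Finset.sum_le_sum fun i hi => h i hi _ (hl i)

open Classical in
/-- The near part passes to pointwise limits. It is a finite sum of pairings with translates of `K`,
which lie in the dual spaces of `ℓ^r` and `ℓ^s`. -/
lemma nearPart_limit {I : Type*} [AddCommGroup I] (K : I → ℝ≥0∞) {θ : ℝ}
    (hK : ∀ q : ℝ, 0 < q → 1 / q < θ → ∑' v, K v ^ q ≠ ∞)
    {r s : ℝ} (hr : 1 < r) (hs : 1 < s) (hrs : 2 < 1 / r + 1 / s + θ)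
    {U : Ultrafilter ℕ} (F G : ℕ → I → ℝ≥0∞) (f g : I → ℝ≥0∞)
    (hF : ∀ k, ∑' j, F k j ^ r ≤ 1) (hG : ∀ k, ∑' j, G k j ^ s ≤ 1)
    (hf : ∀ j, Tendsto (fun k => F k j) U (𝓝 (f j)))
    (hg : ∀ j, Tendsto (fun k => G k j) U (𝓝 (g j))) (B : Finset I)
    {L : ℝ≥0∞} (hL : Tendsto (fun k => nearPart K (F k) (G k) B) U (𝓝 L)) :
    L ≤ nearPart K f g B := by
  have hr1 : 1 / r < 1 := by rw [div_lt_one] <;> linarith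
  have hs1 : 1 / s < 1 := by rw [div_lt_one] <;> linarith
  have hFk := fun k i => le_one_of_tsum_rpow hr (hF k) i
  have hGk := fun k i => le_one_of_tsum_rpow hs (hG k) i
  have hf1 : ∀ i, f i ≤ 1 := fun i => le_of_tendsto' (hf i) fun k => hFk k i
  have hg1 : ∀ i, g i ≤ 1 := fun i => le_of_tendsto' (hg i) fun k => hGk k i
  have hprod : ∀ i j, Tendsto (fun k => F k i * G k j) U (𝓝 (f i * g j)) := fun i j =>
    ENNReal.Tendsto.mul (hf i) (Or.inr ((hg1 j).trans_lt ENNReal.one_lt_top).ne)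
      (hg j) (Or.inr ((hf1 i).trans_lt ENNReal.one_lt_top).ne)
  have hrc := (Real.HolderConjugate.conjExponent hr).symm
  have hsc := (Real.HolderConjugate.conjExponent hs).symm
  have hKr : ∑' v, K v ^ r.conjExponent ≠ ∞ := hK _ hrc.pos (by
    have := hrc.one_div_eq; linarith)
  have hKs : ∑' v, K v ^ s.conjExponent ≠ ∞ := hK _ hsc.pos (by
    have := hsc.one_div_eq; linarith)
  obtain ⟨L1, hL1⟩ := exists_tendsto U fun k => ∑ i ∈ B, ∑' j, F k i * G k j * K (i - j)
  obtain ⟨L2, hL2⟩ := exists_tendsto U fun k =>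
    ∑ j ∈ B, ∑' i, (if i ∈ B then 0 else F k i * G k j) * K (i - j)
  rw [tendsto_nhds_unique hL (hL1.add hL2)]
  refine add_le_add (sum_le_of_tendsto B _ _ (fun i _ l hl => ?_) hL1)
    (sum_le_of_tendsto B _ _ (fun j _ l hl => ?_) hL2)
  · refine le_tsum_of_tendsto (fun j => K (i - j)) hsc ?_ (fun k j => F k i * G k j)
      (fun j => f i * g j) (fun k => ?_) (fun j => hprod i j) hl
    · rwa [← (Equiv.subLeft i).tsum_eq (fun v => K v ^ s.conjExponent)] at hKs
    · refine le_trans (ENNReal.tsum_le_tsum fun j => ?_) (hG k)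
      exact ENNReal.rpow_le_rpow (mul_le_of_le_one_left' (hFk k i)) (by linarith)
  · refine le_tsum_of_tendsto (fun i => K (i - j)) hrc ?_
      (fun k i => if i ∈ B then 0 else F k i * G k j)
      (fun i => if i ∈ B then 0 else f i * g j) (fun k => ?_) (fun i => ?_) hl
    · rwa [← (Equiv.subRight j).tsum_eq (fun v => K v ^ r.conjExponent)] at hKr
    · refine le_trans (ENNReal.tsum_le_tsum fun i => ?_) (hF k)
      refine ENNReal.rpow_le_rpow ?_ (by linarith)
      split_ifs
      · exact bot_le
      · exact mul_le_of_le_one_right' (hGk k j)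
    · by_cases hi : i ∈ B
      · simp [hi]
      · simpa [hi] using hprod i j

/-- The mass of `f` off `B` is at most what `B` leaves of the unit budget. The subtraction in `ℝ≥0∞` is not
truncated here, as the sum over `B` is at most `1`. -/
lemma tsum_off_le {I : Type*} (B : Finset I) (f : I → ℝ≥0∞) {r : ℝ} (hr : 1 < r)
    (h : ∑' i, f i ^ r ≤ 1) : ∑' i, off B f i ^ r ≤ 1 - ∑ i ∈ B, f i ^ r := by
  classical
  have hB : ∑ i ∈ B, f i ^ r ≠ ∞ :=
    (((ENNReal.sum_le_tsum B).trans h).trans_lt ENNReal.one_lt_top).ne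
  refine ENNReal.le_sub_of_add_le_left hB (le_trans (le_of_eq ?_) h)
  have h1 : ∑ i ∈ B, f i ^ r = ∑' i, if i ∈ B then f i ^ r else 0 := by
    rw [tsum_eq_sum (s := B) (fun i hi => by simp [hi])]
    exact Finset.sum_congr rfl fun i hi => by simp [hi]
  rw [h1, ← ENNReal.tsum_add]
  refine tsum_congr fun i => ?_
  by_cases hi : i ∈ B <;> simp [off, hi, ENNReal.zero_rpow_of_pos (by linarith : 0 < r)]

/-! ### Strict subadditivity -/

/-- The scalar inequality that excludes dichotomy: as `1 / r + 1 / s > 1`, splitting the mass of `f` and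
`g` into two independent pieces is strictly suboptimal. Replacing `q` by the smaller exponent `1 - p`
reduces it to the weighted arithmetic-geometric mean inequality. -/
lemma real_dichotomy {a b p q : ℝ} (ha0 : 0 < a) (ha1 : a ≤ 1) (hb0 : 0 ≤ b) (hb1 : b ≤ 1)
    (hp0 : 0 < p) (hp1 : p < 1) (hq0 : 0 < q) (hpq : 1 < p + q)
    (h : 1 ≤ a ^ p * b ^ q + (1 - a) ^ p * (1 - b) ^ q) : a = 1 ∧ b = 1 := by
  have key : ∀ x y : ℝ, 0 ≤ x → 0 ≤ y → x ^ p * y ^ (1 - p) ≤ p * x + (1 - p) * y :=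
    fun x y hx hy => Real.geom_mean_le_arith_mean2_weighted hp0.le (by linarith) hx hy (by linarith)
  have k1 := key a b ha0.le hb0
  have k2 := key (1 - a) (1 - b) (by linarith) (by linarith)
  have hap : 0 < a ^ p := Real.rpow_pos_of_pos ha0 p
  have m2 : (1 - b) ^ q ≤ (1 - b) ^ (1 - p) :=
    Real.rpow_le_rpow_of_exponent_ge' (by linarith) (by linarith) (by linarith) (by linarith)
  have m2' : (1 - a) ^ p * (1 - b) ^ q ≤ (1 - a) ^ p * (1 - b) ^ (1 - p) :=
    mul_le_mul_of_nonneg_left m2 (Real.rpow_nonneg (by linarith) _)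
  rcases hb0.eq_or_lt with hb | hb
  · exfalso
    subst hb
    rw [Real.zero_rpow hq0.ne', mul_zero, zero_add, sub_zero, Real.one_rpow, mul_one] at h
    have : (1 - a) ^ p < 1 := Real.rpow_lt_one (by linarith) (by linarith) hp0
    linarith
  rcases hb1.eq_or_lt with hb' | hb'
  · subst hb'
    refine ⟨?_, rfl⟩
    rw [sub_self, Real.zero_rpow hq0.ne', mul_zero, add_zero, Real.one_rpow, mul_one] at h
    by_contra hne
    have : a ^ p < 1 := Real.rpow_lt_one ha0.le (lt_of_le_of_ne ha1 hne) hp0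
    linarith
  · exfalso
    have m1 : b ^ q < b ^ (1 - p) := Real.rpow_lt_rpow_of_exponent_gt hb hb' (by linarith)
    have m1' : a ^ p * b ^ q < a ^ p * b ^ (1 - p) := mul_lt_mul_of_pos_left m1 hap
    linarith

/-- If `X` is the value of the form at the limit pair, of masses `a` and `b`, and at most
`C * (1 - a) ^ p * (1 - b) ^ q` escapes to infinity, then no mass is lost. -/
lemma ennreal_dichotomy {a b C X : ℝ≥0∞} {p q : ℝ} (ha0 : a ≠ 0) (ha1 : a ≤ 1) (hb1 : b ≤ 1)
    (hp0 : 0 < p) (hp1 : p < 1) (hq0 : 0 < q) (hpq : 1 < p + q) (hC0 : C ≠ 0) (hC : C ≠ ∞)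
    (hX : X ≤ C * a ^ p * b ^ q) (h : C ≤ X + C * (1 - a) ^ p * (1 - b) ^ q) :
    a = 1 ∧ b = 1 := by
  have h1 : C * 1 ≤ C * (a ^ p * b ^ q + (1 - a) ^ p * (1 - b) ^ q) := by
    calc C * 1 = C := mul_one C
      _ ≤ _ := h
      _ ≤ C * a ^ p * b ^ q + C * (1 - a) ^ p * (1 - b) ^ q := by gcongr
      _ = _ := by ring
  rw [ENNReal.mul_le_mul_iff_right hC0 hC] at h1
  lift a to NNReal using (ha1.trans_lt ENNReal.one_lt_top).ne
  lift b to NNReal using (hb1.trans_lt ENNReal.one_lt_top).ne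
  rw [← ENNReal.coe_one, ← ENNReal.coe_sub, ← ENNReal.coe_sub,
    ← ENNReal.coe_rpow_of_nonneg _ hp0.le, ← ENNReal.coe_rpow_of_nonneg _ hp0.le,
    ← ENNReal.coe_rpow_of_nonneg _ hq0.le, ← ENNReal.coe_rpow_of_nonneg _ hq0.le] at h1
  norm_cast at h1 ha1 hb1 ha0 ⊢
  have h2 : (1 : ℝ) ≤ (a : ℝ) ^ p * (b : ℝ) ^ q + (1 - (a : ℝ)) ^ p * (1 - (b : ℝ)) ^ q := by
    have := NNReal.coe_le_coe.2 h1
    push_cast [NNReal.coe_sub ha1, NNReal.coe_sub hb1] at this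
    exact this
  have := real_dichotomy (a := a) (b := b) (by positivity) (by exact_mod_cast ha1) b.coe_nonneg
    (by exact_mod_cast hb1) hp0 hp1 hq0 hpq h2
  exact_mod_cast this

/-! ### Existence of maximizers -/

/-- Fatou's lemma for the `ℓ^r` ball. -/
lemma tsum_le_one_of_tendsto {I : Type*} {U : Ultrafilter ℕ} {F : ℕ → I → ℝ≥0∞} {f : I → ℝ≥0∞}
    {r : ℝ} (hF : ∀ k, ∑' j, F k j ^ r ≤ 1)
    (hf : ∀ j, Tendsto (fun k => F k j) U (𝓝 (f j))) : ∑' j, f j ^ r ≤ 1 := by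
  rw [ENNReal.tsum_eq_iSup_sum]
  refine iSup_le fun B => ?_
  refine le_of_tendsto' (tendsto_finsetSum B fun j _ =>
    (ENNReal.continuous_rpow_const (y := r)).continuousAt.tendsto.comp (hf j)) fun k => ?_
  exact (ENNReal.sum_le_tsum B).trans (hF k)

lemma tendsto_defect {ι : Type*} {l : Filter ι} {a b : ι → ℝ≥0∞} {a0 b0 C : ℝ≥0∞} {p q : ℝ}
    (hp : 0 ≤ p) (hq : 0 ≤ q) (hC : C ≠ ∞) (ha : Tendsto a l (𝓝 a0)) (hb : Tendsto b l (𝓝 b0)) :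
    Tendsto (fun k => C * (1 - a k) ^ p * (1 - b k) ^ q) l (𝓝 (C * (1 - a0) ^ p * (1 - b0) ^ q)) := by
  have h : ∀ {x : ι → ℝ≥0∞} {x0 : ℝ≥0∞} {e : ℝ}, Tendsto x l (𝓝 x0) →
      Tendsto (fun k => (1 - x k) ^ e) l (𝓝 ((1 - x0) ^ e)) := fun {x x0 e} hx =>
    (ENNReal.continuous_rpow_const (y := e)).continuousAt.tendsto.comp
      (ENNReal.Tendsto.sub tendsto_const_nhds hx (Or.inl ENNReal.one_ne_top))
  have hfin : ∀ (x : ℝ≥0∞) {e : ℝ}, 0 ≤ e → (1 - x) ^ e ≠ ∞ := fun x e he =>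
    ENNReal.rpow_ne_top_of_nonneg he (tsub_le_self.trans_lt ENNReal.one_lt_top).ne
  exact ENNReal.Tendsto.mul (ENNReal.Tendsto.const_mul (h ha) (Or.inr hC)) (Or.inr (hfin _ hq))
    (h hb) (Or.inr (ENNReal.mul_ne_top hC (hfin _ hp)))

/-- Non-vanishing: if the form is not small, then `f` has a value that is not small. The inequality
`hls` still holds with `r` replaced by a slightly larger exponent `1 / x`, and on the unit ball of
`ℓ^r` the `ℓ^{1/x}` norm is controlled by a positive power of the supremum of `f`. -/
lemma exists_large_value {I : Type*} [AddCommGroup I] (K : I → ℝ≥0∞) {θ : ℝ} (hθ : θ < 1)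
    (hK : ∀ q : ℝ, 0 < q → 1 / q < θ → ∑' v, K v ^ q ≠ ∞)
    {r s : ℝ} (hr : 1 < r) (hs : 1 < s) (hrs : 2 < 1 / r + 1 / s + θ)
    {c : ℝ≥0∞} (hc : c ≠ 0) :
    ∃ δ : ℝ≥0∞, δ ≠ 0 ∧ ∀ f g : I → ℝ≥0∞, ∑' i, f i ^ r ≤ 1 → ∑' i, g i ^ s ≤ 1 →
      c < Bil K f g → ∃ i, δ ≤ f i := by
  have hs1 : 1 / s < 1 := by rw [div_lt_one] <;> linarith
  have hr0 : 0 < r := by linarith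
  have hs0 : 0 < s := by linarith
  obtain ⟨x, hx1, hx2⟩ := exists_between (show 2 - 1 / s - θ < 1 / r by linarith)
  have hx0 : 0 < x := by linarith
  have hxr : r < 1 / x := by
    rw [lt_div_iff₀ hx0]; rw [lt_div_iff₀ hr0] at hx2; linarith
  obtain ⟨A, hA, hbound⟩ := hls K hθ hK (r := 1 / x) (s := s) (by linarith) hs
    (by rw [one_div_one_div]; linarith)
  rw [one_div_one_div] at hbound
  have he : 0 < (1 / x - r) * x := mul_pos (by linarith) hx0
  set e := (1 / x - r) * x with he_def
  -- chosen so that `A * δ ^ e ≤ c`; the `+ 1` guards against `A = 0`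
  refine ⟨(c / (A + 1)) ^ (1 / e), ?_, fun f g hf hg hlt => ?_⟩
  · have : c / (A + 1) ≠ 0 := ENNReal.div_ne_zero.2 ⟨hc, by simp [hA]⟩
    intro h0
    exact this ((ENNReal.rpow_eq_zero_iff_of_pos (by positivity)).1 h0)
  by_contra! hsmall
  refine hlt.not_ge ((hbound f g).trans ?_)
  set δ := (c / (A + 1)) ^ (1 / e)
  have h1 : ∑' i, f i ^ (1 / x) ≤ δ ^ (1 / x - r) := by
    calc ∑' i, f i ^ (1 / x) ≤ ∑' i, δ ^ (1 / x - r) * f i ^ r := by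
          refine ENNReal.tsum_le_tsum fun i => ?_
          have : f i ^ (1 / x) = f i ^ (1 / x - r) * f i ^ r := by
            rw [← ENNReal.rpow_add_of_nonneg _ _ (by linarith) hr0.le]; congr 1; ring
          rw [this]
          exact mul_le_mul_left (ENNReal.rpow_le_rpow (hsmall i).le (by linarith)) _
      _ = δ ^ (1 / x - r) * ∑' i, f i ^ r := ENNReal.tsum_mul_left
      _ ≤ _ := mul_le_of_le_one_right' hf
  have h2 : (∑' i, f i ^ (1 / x)) ^ x ≤ c / (A + 1) := by
    calc (∑' i, f i ^ (1 / x)) ^ x ≤ (δ ^ (1 / x - r)) ^ x := by gcongr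
      _ = c / (A + 1) := by
        rw [← ENNReal.rpow_mul, ← he_def, ← ENNReal.rpow_mul, one_div_mul_cancel he.ne',
          ENNReal.rpow_one]
  calc A * (∑' i, f i ^ (1 / x)) ^ x * (∑' i, g i ^ s) ^ (1 / s)
      ≤ (A + 1) * (c / (A + 1)) * 1 := by
        gcongr
        · exact le_self_add
        · exact ENNReal.rpow_le_one hg (by positivity)
    _ ≤ c := by rw [mul_one]; exact ENNReal.mul_div_le

/-- The unit-ball supremum of the form is finite and attained at a pair of norm-one sequences. -/
lemma exists_max {I : Type*} [AddCommGroup I] (K : I → ℝ≥0∞) {θ : ℝ} (hθ : θ < 1)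
    (hK : ∀ q : ℝ, 0 < q → 1 / q < θ → ∑' v, K v ^ q ≠ ∞)
    {r s : ℝ} (hr : 1 < r) (hs : 1 < s) (hrs : 2 < 1 / r + 1 / s + θ)
    {v₀ : I} (hv₀ : K v₀ ≠ 0) :
    ∃ f g : I → ℝ≥0∞, ∑' i, f i ^ r = 1 ∧ ∑' i, g i ^ s = 1 ∧ Bil K f g ≠ ∞ ∧
      ∀ f' g' : I → ℝ≥0∞, ∑' i, f' i ^ r ≤ 1 → ∑' i, g' i ^ s ≤ 1 → Bil K f' g' ≤ Bil K f g := by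
  classical
  have hr0 : 0 < r := by linarith
  have hs0 : 0 < s := by linarith
  have hr1 : 1 / r < 1 := by rw [div_lt_one] <;> linarith
  have hr0' : 0 < 1 / r := by positivity
  have hs0' : 0 < 1 / s := by positivity
  obtain ⟨C, hCdef⟩ : ∃ C, C = sSup {c : ℝ≥0∞ | ∃ f g : I → ℝ≥0∞, ∑' i, f i ^ r ≤ 1 ∧
    ∑' i, g i ^ s ≤ 1 ∧ Bil K f g = c} := ⟨_, rfl⟩
  have hC : ∀ f g : I → ℝ≥0∞, ∑' i, f i ^ r ≤ 1 → ∑' i, g i ^ s ≤ 1 → Bil K f g ≤ C :=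
    fun f g hf hg => hCdef ▸ le_sSup ⟨f, g, hf, hg, rfl⟩
  have hCtop : C ≠ ∞ := by
    obtain ⟨A, hA, hbound⟩ := hls K hθ hK hr hs hrs
    refine (lt_of_le_of_lt ?_ hA.lt_top).ne
    rw [hCdef]
    refine sSup_le ?_
    rintro _ ⟨f, g, hf, hg, rfl⟩
    refine (hbound f g).trans (mul_le_of_le_of_le_one (mul_le_of_le_one_right' ?_) ?_)
    · exact ENNReal.rpow_le_one hf hr0'.le
    · exact ENNReal.rpow_le_one hg hs0'.le
  -- two point masses at distance `v₀` show that the supremum is positive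
  have hC0 : C ≠ 0 := by
    have hpt : ∀ (v : I) {p : ℝ}, 0 < p →
        ∑' i, (if i = v then (1 : ℝ≥0∞) else 0) ^ p ≤ 1 := fun v p hp => by
      rw [tsum_eq_single v (fun i hi => by simp [hi, hp])]; simp
    refine (lt_of_lt_of_le (pos_iff_ne_zero.2 hv₀) (le_trans ?_ (hC _ _ (hpt v₀ hr0) (hpt 0 hs0)))).ne'
    refine le_trans ?_ (ENNReal.le_tsum v₀)
    refine le_trans ?_ (ENNReal.le_tsum 0)
    simp
  obtain ⟨δ, hδ, hlarge⟩ := exists_large_value K hθ hK hr hs hrs (c := C / 2)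
    (by simp [hC0])
  obtain ⟨u, -, huI, huC⟩ := exists_seq_strictMono_tendsto' (ENNReal.half_lt_self hC0 hCtop)
  -- a maximizing sequence, translated so that `f` does not vanish in the limit at the origin
  have hseq : ∀ k, ∃ f g : I → ℝ≥0∞, ∑' i, f i ^ r ≤ 1 ∧ ∑' i, g i ^ s ≤ 1 ∧
      u k ≤ Bil K f g ∧ δ ≤ f 0 := by
    intro k
    obtain ⟨_, ⟨f, g, hf, hg, rfl⟩, hlt⟩ := lt_sSup_iff.1 (hCdef ▸ (huI k).2)
    obtain ⟨i₀, hi₀⟩ := hlarge f g hf hg ((huI k).1.trans hlt)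
    refine ⟨fun i => f (i + i₀), fun i => g (i + i₀), ?_, ?_, ?_, by simpa using hi₀⟩
    · exact ((Equiv.addRight i₀).tsum_eq (fun i => f i ^ r)).trans_le hf
    · exact ((Equiv.addRight i₀).tsum_eq (fun i => g i ^ s)).trans_le hg
    · rw [Bil_shift]; exact hlt.le
  choose F G hF hG hu hF0 using hseq
  obtain ⟨U, hU⟩ := Ultrafilter.exists_le (atTop : Filter ℕ)
  choose f hf using fun i => exists_tendsto U (fun k => F k i)
  choose g hg using fun i => exists_tendsto U (fun k => G k i)
  have hlimC : Tendsto (fun k => Bil K (F k) (G k)) U (𝓝 C) :=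
    tendsto_of_tendsto_of_tendsto_of_le_of_le (huC.mono_left hU) tendsto_const_nhds hu
      fun k => hC _ _ (hF k) (hG k)
  have hf1 := tsum_le_one_of_tendsto hF hf
  have hg1 := tsum_le_one_of_tendsto hG hg
  have hf0 : ∑' i, f i ^ r ≠ 0 := fun h0 => hδ <| by
    have : δ ≤ f 0 := ge_of_tendsto' (hf 0) hF0
    rw [eq_zero_of_tsum_rpow f hr h0 0] at this
    exact le_bot_iff.1 this
  have hsumlim : ∀ (B : Finset I) {X : ℕ → I → ℝ≥0∞} {Y : I → ℝ≥0∞} (p : ℝ),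
      (∀ i, Tendsto (fun k => X k i) U (𝓝 (Y i))) →
      Tendsto (fun k => ∑ i ∈ B, X k i ^ p) U (𝓝 (∑ i ∈ B, Y i ^ p)) := fun B X Y p h =>
    tendsto_finsetSum B fun j _ =>
      (ENNReal.continuous_rpow_const (y := p)).continuousAt.tendsto.comp (h j)
  -- the near part converges, and the rest is bounded by the best constant times the masses off `B`
  have hBstep : ∀ B : Finset I, C ≤ Bil K f g
      + C * (1 - ∑ i ∈ B, f i ^ r) ^ (1 / r) * (1 - ∑ i ∈ B, g i ^ s) ^ (1 / s) := by
    intro B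
    obtain ⟨L, hL⟩ := exists_tendsto U fun k => nearPart K (F k) (G k) B
    have hLle := nearPart_limit K hK hr hs hrs F G f g hF hG hf hg B hL
    have hne : ∀ {x : ℝ≥0∞}, x ≤ 1 → x ≠ ∞ := fun hx => (hx.trans_lt ENNReal.one_lt_top).ne
    have h1 : C ≤ L
        + C * (1 - ∑ i ∈ B, f i ^ r) ^ (1 / r) * (1 - ∑ i ∈ B, g i ^ s) ^ (1 / s) := by
      refine le_of_tendsto_of_tendsto' hlimC
        (hL.add (tendsto_defect hr0'.le hs0'.le hCtop (hsumlim B r hf) (hsumlim B s hg))) fun k => ?_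
      have hoF := tsum_off_le B (F k) hr (hF k)
      have hoG := tsum_off_le B (G k) hs (hG k)
      rw [nearPart_add_off K (F k) (G k) B]
      gcongr
      refine (Bil_le_of_normalized K hr hs hC _ _ (hne (hoF.trans tsub_le_self))
        (hne (hoG.trans tsub_le_self))).trans ?_
      gcongr
    refine h1.trans ?_
    gcongr
    refine hLle.trans ?_
    rw [nearPart_add_off K f g B]
    exact le_self_add
  have hfinal : C ≤ Bil K f g
      + C * (1 - ∑' i, f i ^ r) ^ (1 / r) * (1 - ∑' i, g i ^ s) ^ (1 / s) := by
    have hsf : Tendsto (fun B : Finset I => ∑ i ∈ B, f i ^ r) atTop (𝓝 (∑' i, f i ^ r)) :=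
      ENNReal.summable.hasSum
    have hsg : Tendsto (fun B : Finset I => ∑ i ∈ B, g i ^ s) atTop (𝓝 (∑' i, g i ^ s)) :=
      ENNReal.summable.hasSum
    exact ge_of_tendsto' ((tendsto_defect hr0'.le hs0'.le hCtop hsf hsg).const_add (Bil K f g)) hBstep
  have hne : ∀ {x : ℝ≥0∞}, x ≤ 1 → x ≠ ∞ := fun hx => (hx.trans_lt ENNReal.one_lt_top).ne
  obtain ⟨ha, hb⟩ := ennreal_dichotomy hf0 hf1 hg1 hr0' hr1 hs0' (by linarith) hC0 hCtop
    (Bil_le_of_normalized K hr hs hC f g (hne hf1) (hne hg1)) hfinal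
  rw [ha, hb, tsub_self, ENNReal.zero_rpow_of_pos hr0', mul_zero, zero_mul, add_zero] at hfinal
  exact ⟨f, g, ha, hb, ((hC f g hf1 hg1).trans_lt hCtop.lt_top).ne,
    fun f' g' hf' hg' => (hC f' g' hf' hg').trans hfinal⟩

/-! ### The kernel on the integer lattice -/

/-- The kernel `|v| ^ (-lam)` on `ℤ^n`, with the value `0` at the origin to exclude the diagonal. -/
noncomputable def latKer (n : ℕ) (lam : ℝ) (v : Fin n → ℤ) : ℝ≥0∞ :=
  if v = 0 then 0 else ENNReal.ofReal (1 / znorm v ^ lam)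

lemma znorm_nonneg {n : ℕ} (v : Fin n → ℤ) : 0 ≤ znorm v := norm_nonneg _

/-- The lattice sum of `|v| ^ e` converges for `e < -n`. The term at the origin is `0 ^ e = 0`, by the
convention for `Real.rpow`, as `e ≠ 0`. -/
lemma summable_znorm_rpow {n : ℕ} {e : ℝ} (he : e < -(n : ℝ)) :
    Summable fun v : Fin n → ℤ => znorm v ^ e := by
  let b := (EuclideanSpace.basisFun (Fin n) ℝ).toBasis
  let L : Submodule ℤ (EuclideanSpace ℝ (Fin n)) := Submodule.span ℤ (Set.range b)
  have hrank : Module.finrank ℤ L = n := by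
    rw [ZLattice.rank ℝ L]; simp
  have hs := ZLattice.summable_norm_rpow L e (by rw [hrank]; exact he)
  let φ : (Fin n → ℤ) → L := fun v => ⟨∑ t, v t • b t,
    Submodule.sum_mem _ fun t _ => Submodule.smul_mem _ _ (Submodule.subset_span ⟨t, rfl⟩)⟩
  have hφ : ∀ v, ((φ v : L) : EuclideanSpace ℝ (Fin n))
      = (WithLp.equiv 2 (Fin n → ℝ)).symm (fun t => (v t : ℝ)) := by
    intro v
    ext t
    simp [φ, b, Finset.sum_apply, Pi.single_apply]
  have hinj : Function.Injective φ := by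
    intro v w hvw
    have := congrArg (Subtype.val) hvw
    rw [hφ, hφ] at this
    have h2 := (WithLp.equiv 2 (Fin n → ℝ)).symm.injective this
    funext t
    exact_mod_cast congrFun h2 t
  refine (hs.comp_injective hinj).congr fun v => ?_
  simp only [Function.comp, znorm, ← hφ]
  rfl

lemma latKer_summable {n : ℕ} (hn : 1 ≤ n) {lam : ℝ} (q : ℝ) (hq : 0 < q)
    (h : 1 / q < lam / n) : ∑' v, latKer n lam v ^ q ≠ ∞ := by
  have hn0 : (0 : ℝ) < n := by exact_mod_cast hn
  have he : -(lam * q) < -(n : ℝ) := by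
    rw [div_lt_div_iff₀ hq hn0] at h; linarith
  refine ne_top_of_le_ne_top (summable_znorm_rpow he).tsum_ofReal_ne_top
    (ENNReal.tsum_le_tsum fun v => ?_)
  unfold latKer
  split_ifs with hv
  · simp [hq]
  · rw [ENNReal.ofReal_rpow_of_nonneg (by have := znorm_nonneg v; positivity) hq.le]
    refine ENNReal.ofReal_le_ofReal (le_of_eq ?_)
    rw [one_div, ← Real.rpow_neg (znorm_nonneg v), ← Real.rpow_mul (znorm_nonneg v)]
    congr 1; ring

lemma latKer_ne_zero {n : ℕ} (lam : ℝ) {v : Fin n → ℤ} (hv : v ≠ 0) : latKer n lam v ≠ 0 := by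
  have hpos : 0 < znorm v := by
    unfold znorm
    rw [norm_pos_iff]
    intro h0
    apply hv
    have h2 : (fun t => (v t : ℝ)) = 0 :=
      (WithLp.equiv 2 (Fin n → ℝ)).symm.injective (h0.trans rfl)
    funext t
    have h3 : (v t : ℝ) = 0 := congrFun h2 t
    exact_mod_cast h3
  simp only [latKer, hv, if_false]
  exact (ENNReal.ofReal_pos.2 (by positivity)).ne'

/-- The convolution of the kernel with `g` is finite everywhere, as the kernel lies in the dual of
`ℓ^s`. -/
lemma inner_ne_top {n : ℕ} (hn : 1 ≤ n) {lam : ℝ} {s : ℝ} (hs : 1 < s)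
    (hs2 : 1 < 1 / s + lam / n) (g : (Fin n → ℤ) → ℝ≥0∞) (hg : ∑' j, g j ^ s ≤ 1)
    (i : Fin n → ℤ) : ∑' j, g j * latKer n lam (i - j) ≠ ∞ := by
  have hsc := Real.HolderConjugate.conjExponent hs
  have hKs := latKer_summable hn (lam := lam) s.conjExponent hsc.symm.pos (by
    have := hsc.symm.one_div_eq; linarith)
  rw [← (Equiv.subLeft i).tsum_eq (fun v => latKer n lam v ^ s.conjExponent)] at hKs
  refine ne_top_of_le_ne_top ?_ (tsum_mul_le_holder g (fun j => latKer n lam (i - j)) hsc)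
  refine ENNReal.mul_ne_top (ENNReal.rpow_ne_top_of_nonneg (by positivity)
    (hg.trans_lt ENNReal.one_lt_top).ne) (ENNReal.rpow_ne_top_of_nonneg ?_ hKs)
  have := hsc.symm.pos
  positivity

/-- The inner sums are finite, so the real-valued functional `J` is genuinely the convolution form. -/
lemma J_eq_toReal {n : ℕ} (hn : 1 ≤ n) {α : ℝ} {r s : ℝ} (hr : 1 < r) (hs : 1 < s)
    (hs2 : 1 < 1 / s + ((n : ℝ) - α) / n) (f g : (Fin n → ℤ) → ℝ≥0∞)
    (hf : ∑' j, f j ^ r ≤ 1) (hg : ∑' j, g j ^ s ≤ 1) :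
    J α (fun i => (f i).toReal) (fun i => (g i).toReal)
      = (Bil (latKer n ((n : ℝ) - α)) f g).toReal := by
  have hft : ∀ i, f i ≠ ∞ := fun i =>
    ((le_one_of_tsum_rpow hr hf i).trans_lt ENNReal.one_lt_top).ne
  have hin : ∀ i, ∑' j, f i * g j * latKer n ((n : ℝ) - α) (i - j) ≠ ∞ := fun i => by
    simp_rw [mul_assoc]
    rw [ENNReal.tsum_mul_left]
    exact ENNReal.mul_ne_top (hft i) (inner_ne_top hn hs hs2 g hg i)
  unfold J Bil
  rw [ENNReal.tsum_toReal_eq hin]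
  refine tsum_congr fun i => ?_
  rw [ENNReal.tsum_toReal_eq (ENNReal.ne_top_of_tsum_ne_top (hin i))]
  refine tsum_congr fun j => ?_
  have h0 : 0 ≤ (znorm (i - j) ^ ((n : ℝ) - α))⁻¹ := by
    have := znorm_nonneg (i - j); positivity
  by_cases hij : j = i
  · simp [hij, latKer]
  · have : i - j ≠ 0 := sub_ne_zero.2 (Ne.symm hij)
    simp [hij, latKer, this, ENNReal.toReal_mul, ENNReal.toReal_ofReal h0, div_eq_mul_inv]

/-- A function with `lpNorm` equal to `1` has a summable `p`-th power: otherwise the real `tsum` would be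
the junk value `0`. -/
lemma lpNorm_eq_one {n : ℕ} {f : (Fin n → ℤ) → ℝ} {p : ℝ} (hp : 1 < p) (h : lpNorm f p = 1) :
    ∑' i, ENNReal.ofReal |f i| ^ p = 1 := by
  have hp0 : 0 < p := by linarith
  have hnn : ∀ i, 0 ≤ |f i| ^ p := fun i => by positivity
  have h1 : ∑' i, |f i| ^ p = 1 := by
    have h0 : (∑' i, |f i| ^ p) ^ (1 / p) = 1 := h
    have hT : 0 ≤ ∑' i, |f i| ^ p := tsum_nonneg hnn
    have h2 := Real.rpow_mul hT (1 / p) p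
    rwa [one_div_mul_cancel hp0.ne', Real.rpow_one, h0, Real.one_rpow] at h2
  have hsum : Summable fun i => |f i| ^ p := by
    by_contra hns
    rw [tsum_eq_zero_of_not_summable hns] at h1
    exact zero_ne_one h1
  calc ∑' i, ENNReal.ofReal |f i| ^ p = ∑' i, ENNReal.ofReal (|f i| ^ p) :=
        tsum_congr fun i => ENNReal.ofReal_rpow_of_nonneg (abs_nonneg _) hp0.le
    _ = 1 := by rw [← ENNReal.ofReal_tsum_of_nonneg hnn hsum, h1, ENNReal.ofReal_one]

lemma lpNorm_toReal {n : ℕ} {f : (Fin n → ℤ) → ℝ≥0∞} {p : ℝ}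
    (h : ∑' i, f i ^ p = 1) :
    Summable (fun i => |(f i).toReal| ^ p) ∧ lpNorm (fun i => (f i).toReal) p = 1 := by
  have e : (fun i => |(f i).toReal| ^ p) = fun i => (f i ^ p).toReal := by
    funext i
    rw [abs_of_nonneg ENNReal.toReal_nonneg, ENNReal.toReal_rpow]
  have hne : ∑' i, f i ^ p ≠ ∞ := by rw [h]; exact ENNReal.one_ne_top
  refine ⟨?_, ?_⟩
  · rw [e]; exact ENNReal.summable_toReal hne
  · unfold _root_.lpNorm
    rw [e, ← ENNReal.tsum_toReal_eq (ENNReal.ne_top_of_tsum_ne_top hne), h]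
    simp

theorem stmt_11 {n : ℕ} (hn : 1 ≤ n) (α r s : ℝ)
    (hα0 : 0 < α) (hαn : α < n) (hr : 1 < r) (hs : 1 < s)
    (hsup : 1 / r + 1 / s + ((n : ℝ) - α) / n > 2) :
    ∃ f g : (Fin n → ℤ) → ℝ, (∀ i, 0 ≤ f i) ∧ (∀ i, 0 ≤ g i) ∧
      Summable (fun i => |f i| ^ r) ∧ Summable (fun i => |g i| ^ s) ∧
      lpNorm f r = 1 ∧ lpNorm g s = 1 ∧ J α f g = bestConst n α r s := by
  have hn0 : (0 : ℝ) < n := by exact_mod_cast hn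
  have hθ : ((n : ℝ) - α) / n < 1 := by rw [div_lt_one hn0]; linarith
  have hr1 : 1 / r < 1 := by rw [div_lt_one] <;> linarith
  have hs2 : 1 < 1 / s + ((n : ℝ) - α) / n := by linarith
  have hv : (fun _ => 1 : Fin n → ℤ) ≠ 0 := fun h => by
    simpa using congrFun h ⟨0, hn⟩
  obtain ⟨f, g, hf, hg, hfin, hmax⟩ := exists_max (latKer n ((n : ℝ) - α)) hθ
    (latKer_summable hn) hr hs hsup (latKer_ne_zero _ hv)
  obtain ⟨hfs, hfn⟩ := lpNorm_toReal hf
  obtain ⟨hgs, hgn⟩ := lpNorm_toReal hg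
  have hJ := J_eq_toReal hn hr hs hs2 f g hf.le hg.le
  refine ⟨fun i => (f i).toReal, fun i => (g i).toReal, fun _ => ENNReal.toReal_nonneg,
    fun _ => ENNReal.toReal_nonneg, hfs, hgs, hfn, hgn, ?_⟩
  unfold bestConst
  symm
  apply IsGreatest.csSup_eq
  refine ⟨⟨_, _, fun _ => ENNReal.toReal_nonneg,
    fun _ => ENNReal.toReal_nonneg, hfn, hgn, rfl⟩, ?_⟩
  rintro _ ⟨f', g', hf0, hg0, hf', hg', rfl⟩
  have hf1 := (lpNorm_eq_one hr hf').le
  have hg1 := (lpNorm_eq_one hs hg').le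
  have hJ' := J_eq_toReal hn hr hs hs2 _ _ hf1 hg1
  simp only [abs_of_nonneg (hf0 _), abs_of_nonneg (hg0 _), ENNReal.toReal_ofReal (hf0 _),
    ENNReal.toReal_ofReal (hg0 _)] at hJ'
  simp only [abs_of_nonneg (hf0 _), abs_of_nonneg (hg0 _)] at hf1 hg1
  rw [hJ, hJ']
  exact ENNReal.toReal_mono hfin (hmax _ _ hf1 hg1)
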